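/- Let K ≥ 4 be a multiple of 4, let ε ∈ [1/2, 1), and let n be a natural number with n·(1−ε) = K/4. Consider the probability space Ω = ({0,1}^ℕ) × {1,…,K} equipped with the product of the infinite i.i.d. Bernoulli(ε) measure (coordinate e_t equals 1, 'erased', with probability ε) and the uniform measure on {1,…,K} (giving the initial arm ã₀ = u). Let π be any deterministic policy, i.e., any function from finite histories (lists of triples (requested arm, erasure bit, reward bit)) to arms in {1,…,K}. For each instance index i ∈ {1,…,K}, define the process on Ω recursively for t = 1,…,n: a_t = π(h_{t−1}) with h₀ the empty history; ã_t = ã_{t−1} if e_t = 1 and ã_t = a_t if e_t = 0; r_t = 1 if ã_t = i and r_t = 0 otherwise; h_t = h_{t−1} appended with (a_t, e_t, r_t). Define the regret R_i(ω) = |{t ∈ {1,…,n} : ã_t ≠ i}|. Then there exists an instance i ∈ {1,…,K} such that the expectation of R_i is at least n/8 = K/(32·(1−ε)). -/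

import Mathlib

open MeasureTheory ProbabilityTheory

/-- A deterministic policy: a map from finite histories, i.e. lists of triples
(requested arm, erasure bit, reward bit), to the next requested arm. -/
def ErasurePolicy (K : ℕ) : Type := List (Fin K × Bool × Bool) → Fin K

/-- The state of the interaction after `t` rounds in instance `i` (where arm `i` gives
reward `1` and all other arms give reward `0`), for policy `π`, erasure sequence `e`
(`e t = true` means round `t+1` is erased) and uniformly drawn initial arm `u`.
The state consists of the history of triples (requested arm, erasure bit, reward bit)
and the arm currently played by the agent:
`a_t = π(h_{t-1})`, `ã_t = ã_{t-1}` if erased and `ã_t = a_t` otherwise,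
`r_t = 1` iff `ã_t = i`. -/
def erasureState (K : ℕ) (π : ErasurePolicy K) (i : Fin K) (e : ℕ → Bool) (u : Fin K) :
    ℕ → List (Fin K × Bool × Bool) × Fin K
  | 0 => ([], u)
  | t + 1 =>
      let s := erasureState K π i e u t
      let a := π s.1
      let er := e t
      let pl := if er then s.2 else a
      (s.1 ++ [(a, er, decide (pl = i))], pl)

/-- The regret of policy `π` in instance `i` over horizon `n`, on the sample point
`ω = (erasure sequence, initial arm)`: the number of rounds `t ∈ {1,…,n}` in which the
actually played arm `ã_t` differs from the unique rewarding arm `i`. -/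
def erasureRegret (n K : ℕ) (π : ErasurePolicy K) (i : Fin K)
    (ω : (Fin n → Bool) × Fin K) : ℕ :=
  ((Finset.range n).filter fun t =>
    (erasureState K π i (fun s => if h : s < n then ω.1 ⟨s, h⟩ else false) ω.2 (t + 1)).2
      ≠ i).card

/-- The Bernoulli(ε) measure on `Bool` (`true`, i.e. "erased", has probability `ε`). -/
noncomputable def bernoulliMeasure (ε : ℝ) : Measure Bool :=
  ENNReal.ofReal ε • Measure.dirac true + ENNReal.ofReal (1 - ε) • Measure.dirac false

/-- The law of `ω`: the product of the i.i.d. Bernoulli(ε) measure on the erasure bits of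
the `n` rounds and the uniform measure on the `K` possible initial arms. -/
noncomputable def erasureLaw (n K : ℕ) (ε : ℝ) : Measure ((Fin n → Bool) × Fin K) :=
  (Measure.pi fun _ : Fin n => bernoulliMeasure ε).prod
    ((K : ENNReal)⁻¹ • Measure.count)


/-- history when all rewards are zero -/
def refHist (K : ℕ) (π : ErasurePolicy K) (e : ℕ → Bool) : ℕ → List (Fin K × Bool × Bool)
  | 0 => []
  | t + 1 => refHist K π e t ++ [(π (refHist K π e t), e t, false)]

lemma state_eq_ref (n K : ℕ) (π : ErasurePolicy K) (i : Fin K) (e : ℕ → Bool) (u : Fin K)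
    (hu : u ≠ i) (h : ∀ t < n, e t = false → π (refHist K π e t) ≠ i) :
    ∀ t ≤ n, (erasureState K π i e u t).1 = refHist K π e t ∧
      (erasureState K π i e u t).2 ≠ i := by
  intro t
  induction t with
  | zero => intro _; exact ⟨rfl, hu⟩
  | succ t ih =>
    intro ht
    obtain ⟨h1, h2⟩ := ih (by omega)
    have h3 := h t (by omega)
    have key : (if e t then (erasureState K π i e u t).2
        else π (erasureState K π i e u t).1) ≠ i := by
      cases he : e t
      · simpa [h1] using h3 he
      · simpa using h2
    refine ⟨?_, key⟩
    simp only [erasureState, refHist]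
    rw [decide_eq_false key, h1]

lemma sum_regret (n K : ℕ) (π : ErasurePolicy K) (ω : (Fin n → Bool) × Fin K) :
    (n : ℝ) * (K - 1 - ∑ t : Fin n, (if ω.1 t then (0 : ℝ) else 1)) ≤
      ∑ i : Fin K, (erasureRegret n K π i ω : ℝ) := by
  classical
  set e : ℕ → Bool := fun s => if h : s < n then ω.1 ⟨s, h⟩ else false with he
  set F : Finset (Fin n) := Finset.univ.filter (fun t => ω.1 t = false) with hF
  set S : Finset (Fin K) := insert ω.2 (F.image (fun t : Fin n => π (refHist K π e t))) with hS
  have hcard : S.card ≤ F.card + 1 :=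
    (Finset.card_insert_le _ _).trans (Nat.add_le_add_right Finset.card_image_le 1)
  have hc : ∑ t : Fin n, (if ω.1 t then (0 : ℝ) else 1) = F.card := by
    rw [hF, Finset.card_filter]
    push_cast
    refine Finset.sum_congr rfl fun t _ => ?_
    cases ω.1 t <;> simp
  have hR : ∀ i ∈ Sᶜ, erasureRegret n K π i ω = n := by
    intro i hi
    rw [Finset.mem_compl, hS, Finset.mem_insert, Finset.mem_image] at hi
    push Not at hi
    have := state_eq_ref n K π i e ω.2 (Ne.symm hi.1) (by
      intro t ht het
      refine hi.2 ⟨t, ht⟩ ?_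
      rw [hF, Finset.mem_filter]
      refine ⟨Finset.mem_univ _, ?_⟩
      simpa [he, ht] using het)
    unfold erasureRegret
    rw [Finset.filter_true_of_mem, Finset.card_range]
    intro t ht
    exact (this (t + 1) (by have := Finset.mem_range.1 ht; omega)).2
  have h1 : ∑ i ∈ Sᶜ, (erasureRegret n K π i ω : ℝ) ≤
      ∑ i : Fin K, (erasureRegret n K π i ω : ℝ) :=
    Finset.sum_le_sum_of_subset_of_nonneg (Finset.subset_univ _) (fun _ _ _ => by positivity)
  have h2 : ∑ i ∈ Sᶜ, (erasureRegret n K π i ω : ℝ) = (Sᶜ.card : ℝ) * n := by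
    rw [Finset.sum_congr rfl (fun i hi => by rw [hR i hi]), Finset.sum_const, nsmul_eq_mul]
  have h3 : (S.card : ℝ) + (Sᶜ.card : ℝ) = K := by
    have := Finset.card_add_card_compl S
    rw [Fintype.card_fin] at this
    exact_mod_cast this
  have h4 : (S.card : ℝ) ≤ F.card + 1 := by exact_mod_cast hcard
  rw [hc]
  refine le_trans ?_ h1
  rw [h2, mul_comm]
  gcongr
  linarith

lemma bern_prob (ε : ℝ) (h0 : 0 ≤ ε) (h1 : ε ≤ 1) :
    IsProbabilityMeasure (_root_.bernoulliMeasure ε) := by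
  constructor
  simp only [_root_.bernoulliMeasure, Measure.add_apply, Measure.smul_apply, measure_univ, smul_eq_mul,
    mul_one]
  rw [← ENNReal.ofReal_add h0 (by linarith)]
  simp

lemma unif_prob (K : ℕ) (hK : 4 ≤ K) :
    IsProbabilityMeasure ((K : ENNReal)⁻¹ • (Measure.count : Measure (Fin K))) := by
  constructor
  simp only [Measure.smul_apply, smul_eq_mul, Measure.count_univ, ENat.card_eq_coe_fintype_card,
    Fintype.card_fin]
  exact ENNReal.inv_mul_cancel (by simp; omega) (by simp)

theorem erasure_feedback_lower_bound
    (K : ℕ) (hK : 4 ≤ K) (hK4 : 4 ∣ K)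
    (ε : ℝ) (hε0 : 1 / 2 ≤ ε) (hε1 : ε < 1)
    (n : ℕ) (hn : (n : ℝ) * (1 - ε) = (K : ℝ) / 4)
    (π : ErasurePolicy K) :
    ∃ i : Fin K,
      (n : ℝ) / 8 ≤ ∫ ω, (erasureRegret n K π i ω : ℝ) ∂(erasureLaw n K ε) := by
  have := bern_prob ε (by linarith) hε1.le
  have := unif_prob K hK
  have : IsProbabilityMeasure (erasureLaw n K ε) := by unfold erasureLaw; infer_instance
  have hint : ∀ f : (Fin n → Bool) × Fin K → ℝ, Integrable f (erasureLaw n K ε) :=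
    fun f => Integrable.of_finite
  have hmarg : ∀ t : Fin n, ∫ ω, (if ω.1 t then (0 : ℝ) else 1) ∂(erasureLaw n K ε) = 1 - ε := by
    intro t
    have hmp : MeasurePreserving (fun ω : (Fin n → Bool) × Fin K => ω.1 t)
        (erasureLaw n K ε) (bernoulliMeasure ε) :=
      (measurePreserving_eval (fun _ : Fin n => bernoulliMeasure ε) t).comp
        measurePreserving_fst
    have := integral_map (μ := erasureLaw n K ε) hmp.measurable.aemeasurable
      (f := fun b : Bool => if b then (0 : ℝ) else 1)
      (measurable_of_finite _).aestronglyMeasurable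
    rw [← this, hmp.map_eq, _root_.bernoulliMeasure, integral_add_measure, integral_smul_measure,
      integral_smul_measure, integral_dirac, integral_dirac]
    · simp [hε1.le]
    · exact (Integrable.of_finite).smul_measure (by simp)
    · exact (Integrable.of_finite).smul_measure (by simp)
  have hsum : (n : ℝ) * (K - 1 - n * (1 - ε)) ≤
      ∑ i : Fin K, ∫ ω, (erasureRegret n K π i ω : ℝ) ∂(erasureLaw n K ε) := by
    rw [← integral_finsetSum _ (fun i _ => hint _)]
    refine le_trans (le_of_eq ?_) (integral_mono (hint _) (hint _) (sum_regret n K π))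
    rw [integral_const_mul, integral_sub (hint _) (hint _),
      integral_finsetSum _ (fun i _ => hint _), Finset.sum_congr rfl (fun t _ => hmarg t)]
    simp
    left; ring
  by_contra! hcon
  have hlt : ∑ i : Fin K, ∫ ω, (erasureRegret n K π i ω : ℝ) ∂(erasureLaw n K ε)
      ≤ ∑ _i : Fin K, (n : ℝ) / 8 := Finset.sum_le_sum fun i _ => (hcon i).le
  rw [Finset.sum_const, Finset.card_univ, Fintype.card_fin, nsmul_eq_mul] at hlt
  have hK' : (4 : ℝ) ≤ K := by exact_mod_cast hK
  have hnpos : (0 : ℝ) < n := by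
    rcases Nat.eq_zero_or_pos n with h | h
    · subst h; simp at hn; linarith
    · exact_mod_cast h
  rw [hn] at hsum
  nlinarith
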